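/- Let λ_{ij} be a cylindrical growth diagram as above. Then λ_{(r−j)(−i)} = (λ_{ij})^c, where λ^c denotes the complementary partition with respect to the k×(n−k) rectangle (the 180° rotation of the complement). -/

import Mathlib

/-- `β` is obtained from `α` by adding a single box. -/
def OneBox (α β : YoungDiagram) : Prop := α ≤ β ∧ β.cells.card = α.cells.card + 1

/-- Two cells are adjacent if they share an edge. -/
def AdjCell (c d : ℕ × ℕ) : Prop :=
  (c.1 = d.1 ∧ (c.2 + 1 = d.2 ∨ d.2 + 1 = c.2)) ∨
  (c.2 = d.2 ∧ (c.1 + 1 = d.1 ∨ d.1 + 1 = c.1))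

/-- The local recurrence condition of growth diagrams for a square with corners
`γ ⊆ α, δ ⊆ β`: if the two boxes of `β/γ` are nonadjacent then `α` and `δ` are the
two distinct intermediate partitions between `γ` and `β`. -/
def GrowthSq (γ α δ β : YoungDiagram) : Prop :=
  (∃ c ∈ β.cells, ∃ d ∈ β.cells, c ∉ γ.cells ∧ d ∉ γ.cells ∧ c ≠ d ∧ ¬ AdjCell c d) → α ≠ δ

/-- The `k × m` rectangular Young diagram. -/
def rectYD (k m : ℕ) : YoungDiagram :=
  ⟨Finset.range k ×ˢ Finset.range m, by
    intro a b hab hb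
    simp only [Finset.coe_product, Set.mem_prod, Finset.mem_coe, Finset.mem_range] at hb ⊢
    exact ⟨lt_of_le_of_lt hab.1 hb.1, lt_of_le_of_lt hab.2 hb.2⟩⟩

/-- The complement of `μ` in the `k × m` rectangle, rotated by 180°. -/
def complYD (k m : ℕ) (μ : YoungDiagram) : YoungDiagram :=
  ⟨(rectYD k m).cells.filter (fun c => (k - 1 - c.1, m - 1 - c.2) ∉ μ), by
    intro a b hab hb
    simp only [Finset.coe_filter, Set.mem_setOf_eq, Finset.mem_coe] at hb ⊢
    refine ⟨(rectYD k m).isLowerSet hab hb.1, fun hmem => hb.2 ?_⟩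
    exact μ.isLowerSet ⟨Nat.sub_le_sub_left hab.1 _, Nat.sub_le_sub_left hab.2 _⟩ hmem⟩


/-- A cylindrical growth diagram on the diagonal strip `D = {(i,j) : 0 ≤ i+j ≤ r}`:
vertices are labeled by partitions, each edge of the grid adds one box, each unit
square satisfies the growth-diagram recurrence, the main diagonal is labeled by the
empty partition and the outer diagonal by the `k × m` rectangle. -/
def IsCylGrowth (r k m : ℕ) (L : ℤ → ℤ → YoungDiagram) : Prop :=
  (∀ i j : ℤ, 0 ≤ i + j → i + j + 1 ≤ r → OneBox (L i j) (L (i + 1) j)) ∧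
  (∀ i j : ℤ, 0 ≤ i + j → i + j + 1 ≤ r → OneBox (L i j) (L i (j + 1))) ∧
  (∀ i j : ℤ, 0 ≤ i + j → i + j + 2 ≤ r →
    GrowthSq (L i j) (L i (j + 1)) (L (i + 1) j) (L (i + 1) (j + 1))) ∧
  (∀ i : ℤ, L i (-i) = ⊥) ∧
  (∀ i : ℤ, L i ((r : ℤ) - i) = rectYD k m)

/-- The weighted count of lattice paths from `(a, b)` down to `(1, b₀)` with unit steps in the
negative coordinate directions, where every visited lattice point `v` contributes the factor
`w v`. -/
def pathSum (w : ℕ → ℕ → ℝ) (b₀ : ℕ) : ℕ → ℕ → ℝ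
  | 0, _ => 0
  | _ + 1, 0 => 0
  | a + 1, b + 1 =>
    w (a + 1) (b + 1) * ((if a = 0 ∧ b + 1 = b₀ then 1 else 0) +
      pathSum w b₀ a (b + 1) + pathSum w b₀ (a + 1) b)

lemma pathSum_zero_left (w : ℕ → ℕ → ℝ) (b₀ b : ℕ) : pathSum w b₀ 0 b = 0 := by
  simp [pathSum]

lemma pathSum_zero_right (w : ℕ → ℕ → ℝ) (b₀ a : ℕ) : pathSum w b₀ a 0 = 0 := by
  cases a <;> simp [pathSum]

lemma pathSum_succ (w : ℕ → ℕ → ℝ) (b₀ a b : ℕ) :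
    pathSum w b₀ (a + 1) (b + 1) =
      w (a + 1) (b + 1) * ((if a = 0 ∧ b + 1 = b₀ then 1 else 0) +
        pathSum w b₀ a (b + 1) + pathSum w b₀ (a + 1) b) := by
  rw [pathSum]

lemma pathSum_congr {k n : ℕ} {w w' : ℕ → ℕ → ℝ}
    (h : ∀ a b, a < k → b < n → w (a + 1) (b + 1) = w' (a + 1) (b + 1)) (b₀ a b : ℕ)
    (ha : a ≤ k) (hb : b ≤ n) : pathSum w b₀ a b = pathSum w' b₀ a b := by
  induction a generalizing b with
  | zero => simp [pathSum_zero_left]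
  | succ a iha =>
    induction b with
    | zero => simp [pathSum_zero_right]
    | succ b ihb =>
      rw [pathSum_succ, pathSum_succ, h a b ha hb, iha _ (by omega) hb, ihb (by omega)]

/-- The ratio of a label to the sum of the labels it covers. -/
noncomputable def downRatio (f : ℕ → ℕ → ℝ) (a b : ℕ) : ℝ :=
  f a b / (f (a - 1) b + f a (b - 1))

/-- The ratio of the inverse of a label to the sum of the inverses of the labels covering it. -/
noncomputable def upRatio (f : ℕ → ℕ → ℝ) (a b : ℕ) : ℝ :=
  (f a b * ((f (a + 1) b)⁻¹ + (f a (b + 1))⁻¹))⁻¹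

/-- A positive labelling of the product of chains `[1, k] × [1, n]`, extended by the label `1`
below the minimum, `Q` above the maximum, and `0` at the other neighbouring positions. -/
structure IsBoxLabelling (k n : ℕ) (Q : ℝ) (f : ℕ → ℕ → ℝ) : Prop where
  pos : ∀ a b, a < k → b < n → 0 < f (a + 1) (b + 1)
  bot : f 0 1 = 1
  bot_row : ∀ b, b ≠ 1 → f 0 b = 0
  bot_col : ∀ a, f (a + 1) 0 = 0
  top : f (k + 1) n = Q
  top_row : ∀ b, b ≠ n → f (k + 1) b = 0
  top_col : ∀ a, a < k → f (a + 1) (n + 1) = 0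

namespace IsBoxLabelling

variable {k n : ℕ} {Q : ℝ} {f : ℕ → ℕ → ℝ}

lemma nonneg (hf : IsBoxLabelling k n Q f) (hQ : 0 < Q) (a b : ℕ) (ha : a ≤ k + 1)
    (hb : b ≤ n + 1) (hab : a ≤ k ∨ b ≤ n) : 0 ≤ f a b := by
  rcases a with _ | a
  · by_cases h : b = 1
    · rw [h, hf.bot]; exact zero_le_one
    · rw [hf.bot_row b h]
  by_cases hak : a = k
  · subst hak
    by_cases h : b = n
    · rw [h, hf.top]; exact hQ.le
    · rw [hf.top_row b h]
  rcases b with _ | b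
  · rw [hf.bot_col]
  by_cases hbn : b = n
  · subst hbn
    rw [hf.top_col a (by omega)]
  · exact (hf.pos a b (by omega) (by omega)).le

lemma lower_pos (hf : IsBoxLabelling k n Q f) (hQ : 0 < Q) (a b : ℕ) (ha : a < k) (hb : b < n) :
    0 < f a (b + 1) + f (a + 1) b := by
  have h1 := hf.nonneg hQ a (b + 1) (by omega) (by omega) (by omega)
  have h2 := hf.nonneg hQ (a + 1) b (by omega) (by omega) (by omega)
  rcases a with _ | a
  · rcases b with _ | b
    · have := hf.bot
      simp only [zero_add] at *
      linarith
    · have := hf.pos 0 b (by omega) (by omega)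
      linarith
  · have := hf.pos a b (by omega) (by omega)
    linarith

lemma upper_pos (hf : IsBoxLabelling k n Q f) (hQ : 0 < Q) (a b : ℕ) (ha : a < k) (hb : b < n) :
    0 < (f (a + 2) (b + 1))⁻¹ + (f (a + 1) (b + 2))⁻¹ := by
  have h1 := inv_nonneg.2 (hf.nonneg hQ (a + 2) (b + 1) (by omega) (by omega) (by omega))
  have h2 := inv_nonneg.2 (hf.nonneg hQ (a + 1) (b + 2) (by omega) (by omega) (by omega))
  by_cases hak : a + 1 = k
  · by_cases hbn : b + 1 = n
    · have : 0 < (f (a + 2) (b + 1))⁻¹ := by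
        subst hak; subst hbn
        rw [hf.top]; exact inv_pos.2 hQ
      linarith
    · have := inv_pos.2 (hf.pos a (b + 1) (by omega) (by omega))
      linarith
  · have := inv_pos.2 (hf.pos (a + 1) b (by omega) (by omega))
    linarith

lemma pathSum_downRatio (hf : IsBoxLabelling k n Q f) (hQ : 0 < Q) (a b : ℕ) (ha : a < k)
    (hb : b < n) : pathSum (downRatio f) 1 (a + 1) (b + 1) = f (a + 1) (b + 1) := by
  have key : ∀ c d, c ≤ k → d < n → pathSum (downRatio f) 1 c (d + 1) =
      f c (d + 1) - (if c = 0 ∧ d = 0 then 1 else 0) := by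
    intro c
    induction c with
    | zero =>
      intro d _ _
      rw [pathSum_zero_left]
      by_cases h : d = 0
      · subst h; simp [hf.bot]
      · rw [hf.bot_row _ (by omega)]; simp [h]
    | succ c ihc =>
      intro d hc hd
      have hpos := (hf.lower_pos hQ c d (by omega) hd).ne'
      have hd' : pathSum (downRatio f) 1 (c + 1) d = f (c + 1) d := by
        induction d with
        | zero => rw [pathSum_zero_right, hf.bot_col]
        | succ d ihd =>
          have hpos' := (hf.lower_pos hQ c d (by omega) (by omega)).ne'
          rw [pathSum_succ, ihc d (by omega) (by omega), ihd (by omega) hpos', downRatio]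
          simp only [Nat.add_sub_cancel, Nat.add_eq_right]
          field_simp
          ring
      rw [pathSum_succ, ihc d (by omega) hd, hd', downRatio]
      simp only [Nat.add_sub_cancel, Nat.add_eq_right]
      simp
      field_simp
  rw [key _ _ (by omega) hb]
  simp

lemma pathSum_upRatio_mul (hf : IsBoxLabelling k n Q f) (hQ : 0 < Q) (b₀ a b : ℕ) (ha : a < k)
    (hb : b < n) :
    pathSum (upRatio f) b₀ (a + 1) (b + 1) * ((f (a + 2) (b + 1))⁻¹ + (f (a + 1) (b + 2))⁻¹) =
      ((if a = 0 ∧ b + 1 = b₀ then 1 else 0) + pathSum (upRatio f) b₀ a (b + 1) +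
        pathSum (upRatio f) b₀ (a + 1) b) * (f (a + 1) (b + 1))⁻¹ := by
  have h1 := (hf.upper_pos hQ a b ha hb).ne'
  rw [pathSum_succ, upRatio, mul_inv]
  have : ∀ s t u : ℝ, s ≠ 0 → t * s⁻¹ * u * s = u * t := by
    intro s t u hs; field_simp
  exact this _ _ _ h1

/-- Path sums starting at the maximum recover the inverse labels. -/
lemma pathSum_upRatio_top (hf : IsBoxLabelling k n Q f) (hQ : 0 < Q) (hk : 0 < k) (b₀ : ℕ)
    (hb : b₀ < n) : pathSum (upRatio f) (b₀ + 1) k n = Q * (f 1 (b₀ + 1))⁻¹ := by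
  set G := pathSum (upRatio f) (b₀ + 1) with hG
  have h : ∀ a ∈ Finset.range k, ∀ b ∈ Finset.range n,
      (G (a + 1) (b + 1) * (f (a + 2) (b + 1))⁻¹ - G a (b + 1) * (f (a + 1) (b + 1))⁻¹) +
      (G (a + 1) (b + 1) * (f (a + 1) (b + 2))⁻¹ - G (a + 1) b * (f (a + 1) (b + 1))⁻¹) =
      if b = b₀ then (if a = 0 then (f 1 (b₀ + 1))⁻¹ else 0) else 0 := by
    intro a ha b hb
    have := hf.pathSum_upRatio_mul hQ (b₀ + 1) a b (by simpa using ha) (by simpa using hb)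
    rw [← hG] at this
    have e : (if a = 0 ∧ b + 1 = b₀ + 1 then (1 : ℝ) else 0) * (f (a + 1) (b + 1))⁻¹ =
        if b = b₀ then (if a = 0 then (f 1 (b₀ + 1))⁻¹ else 0) else 0 := by
      by_cases h1 : a = 0 <;> by_cases h2 : b = b₀ <;> simp [h1, h2]
    rw [← e]
    linear_combination this
  have h2 := Finset.sum_congr rfl fun a ha => Finset.sum_congr rfl (h a ha)
  simp only [Finset.sum_add_distrib] at h2
  rw [Finset.sum_comm] at h2
  have t1 : ∀ b, ∑ a ∈ Finset.range k, (G (a + 1) (b + 1) * (f (a + 2) (b + 1))⁻¹ -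
      G a (b + 1) * (f (a + 1) (b + 1))⁻¹) = G k (b + 1) * (f (k + 1) (b + 1))⁻¹ := by
    intro b
    rw [Finset.sum_range_sub (fun a => G a (b + 1) * (f (a + 1) (b + 1))⁻¹)]
    simp [hG, pathSum_zero_left]
  have t2 : ∀ a ∈ Finset.range k, ∑ b ∈ Finset.range n, (G (a + 1) (b + 1) * (f (a + 1) (b + 2))⁻¹ -
      G (a + 1) b * (f (a + 1) (b + 1))⁻¹) = 0 := by
    intro a ha
    rw [Finset.sum_range_sub (fun b => G (a + 1) b * (f (a + 1) (b + 1))⁻¹)]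
    simp [hG, pathSum_zero_right, hf.top_col a (by simpa using ha)]
  rw [Finset.sum_congr rfl fun b _ => t1 b, Finset.sum_congr rfl t2] at h2
  obtain ⟨n, rfl⟩ : ∃ n', n = n' + 1 := ⟨n - 1, by omega⟩
  rw [Finset.sum_range_succ, Finset.sum_eq_zero, hf.top] at h2
  · simp [hk, hb] at h2
    rw [← h2]
    field_simp
  · intro b hb
    rw [hf.top_row _ (by have := Finset.mem_range.1 hb; omega)]
    simp

end IsBoxLabelling

/-- The accumulated correction relating path sums of down-ratios and of up-ratios. -/
noncomputable def jumpSum (k : ℕ) (f G : ℕ → ℕ → ℝ) : ℕ → ℕ → ℝ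
  | _, 0 => 0
  | a, b + 1 =>
    if a < k then jumpSum k f G (a + 1) b + (G a b + G (a + 1) (b - 1)) * (f (a + 1) b)⁻¹ else 0

lemma jumpSum_zero (k : ℕ) (f G : ℕ → ℕ → ℝ) (a : ℕ) : jumpSum k f G a 0 = 0 := by
  simp [jumpSum]

lemma jumpSum_succ {k : ℕ} (f G : ℕ → ℕ → ℝ) {a : ℕ} (b : ℕ) (ha : a < k) :
    jumpSum k f G a (b + 1) =
      jumpSum k f G (a + 1) b + (G a b + G (a + 1) (b - 1)) * (f (a + 1) b)⁻¹ := by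
  simp [jumpSum, ha]

lemma jumpSum_self (k : ℕ) (f G : ℕ → ℕ → ℝ) (b : ℕ) : jumpSum k f G k b = 0 := by
  cases b <;> simp [jumpSum]

namespace IsBoxLabelling

variable {k n : ℕ} {Q : ℝ} {f : ℕ → ℕ → ℝ}

lemma jumpSum_succ_right (hf : IsBoxLabelling k n Q f) (hQ : 0 < Q) (b₀ a b : ℕ) (ha : a < k)
    (hb : b < n) :
    jumpSum k f (pathSum (upRatio f) b₀) (a + 1) (b + 1) =
      jumpSum k f (pathSum (upRatio f) b₀) (a + 1) b +
        pathSum (upRatio f) b₀ (a + 1) b * (f (a + 2) b)⁻¹ := by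
  induction b generalizing a with
  | zero =>
    by_cases hak : a + 1 = k
    · rw [hak, jumpSum_self, jumpSum_self, pathSum_zero_right]; simp
    · rw [jumpSum_succ _ _ _ (by omega)]
      simp [jumpSum_zero, pathSum_zero_right]
  | succ b ih =>
    by_cases hak : a + 1 = k
    · subst hak
      rw [jumpSum_self, jumpSum_self, hf.top_row _ (by omega)]; simp
    · rw [jumpSum_succ (a := a + 1) _ _ (b + 1) (by omega),
        jumpSum_succ (a := a + 1) _ _ b (by omega), ih (a + 1) (by omega) (by omega)]
      rcases b with _ | b
      · simp [pathSum_zero_right]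
      · have := hf.pathSum_upRatio_mul hQ b₀ (a + 1) b (by omega) (by omega)
        simp only [Nat.add_eq_zero_iff, one_ne_zero, and_false, false_and, if_false,
          zero_add] at this
        simp only [Nat.add_sub_cancel]
        linear_combination this

lemma pathSum_downRatio_eq (hf : IsBoxLabelling k n Q f) (hQ : 0 < Q) (b₀ a b : ℕ)
    (hb₀ : 0 < b₀) (ha : a ≤ k) (hb : b < n) :
    pathSum (downRatio f) (b₀ + 1) a (b + 1) = pathSum (upRatio f) b₀ a b +
      f a (b + 1) * jumpSum k f (pathSum (upRatio f) b₀) a (b + 1) := by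
  induction a generalizing b with
  | zero =>
    rw [pathSum_zero_left, pathSum_zero_left]
    rcases b with _ | b
    · rcases k with _ | k
      · simp [jumpSum_self]
      · rw [jumpSum_succ _ _ _ (by omega)]
        simp [jumpSum_zero, pathSum_zero_right]
    · rw [hf.bot_row _ (by omega)]; simp
  | succ a iha =>
    rw [hf.jumpSum_succ_right hQ b₀ a b (by omega) hb, pathSum_succ, iha b (by omega) hb,
      jumpSum_succ _ _ _ (by omega)]
    induction b with
    | zero => simp [jumpSum_zero, pathSum_zero_right]; omega
    | succ b ihb =>
      have h := ihb (by omega)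
      rw [← jumpSum_succ _ _ _ (by omega), ← iha b (by omega) (by omega), ← pathSum_succ,
        ← hf.jumpSum_succ_right hQ b₀ a b (by omega) (by omega)] at h
      rw [h]
      have hm := hf.pathSum_upRatio_mul hQ b₀ a b (by omega) (by omega)
      have hz := hf.pos a b (by omega) (by omega)
      have hx := hf.pos a (b + 1) (by omega) (by omega)
      have hw := hf.nonneg hQ a (b + 2) (by omega) (by omega) (by omega)
      have hδ : (if a = 0 ∧ b + 1 = b₀ then (1 : ℝ) else 0) * f a (b + 2) = 0 := by
        by_cases h0 : a = 0
        · rw [h0, hf.bot_row _ (by omega), mul_zero]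
        · simp [h0]
      clear ihb iha
      simp only [downRatio, Nat.add_sub_cancel, Nat.add_right_cancel_iff] at *
      simp only [add_assoc, Nat.reduceAdd] at *
      generalize (if a = 0 ∧ b + 1 = b₀ then (1 : ℝ) else 0) = δ at *
      generalize (f (a + 2) (b + 1))⁻¹ = u at *
      generalize jumpSum k f (pathSum (upRatio f) b₀) (a + 1) (b + 1) = C at *
      generalize pathSum (upRatio f) b₀ (a + 1) (b + 1) = G at *
      generalize pathSum (upRatio f) b₀ (a + 1) b = G1 at *
      generalize pathSum (upRatio f) b₀ a (b + 1) = G2 at *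
      generalize f (a + 1) (b + 1) = z at *
      generalize f (a + 1) (b + 2) = x at *
      generalize f a (b + 2) = w at *
      have hwz : w + z ≠ 0 := by positivity
      have e : G + x * (C + G * u) = x * C + x * ((δ + (G2 + G1)) * z⁻¹) := by
        rw [← hm]; field_simp; ring
      rw [e]
      field_simp
      linear_combination (-1 : ℝ) * hδ

/-- Path sums of down-ratios from the last to the first row agree with those of up-ratios one
column further to the left. -/
lemma pathSum_downRatio_succ (hf : IsBoxLabelling k n Q f) (hQ : 0 < Q) (b₀ b : ℕ)
    (hb₀ : 0 < b₀) (hb : b < n) :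
    pathSum (downRatio f) (b₀ + 1) k (b + 1) = pathSum (upRatio f) b₀ k b := by
  rw [hf.pathSum_downRatio_eq hQ b₀ k b hb₀ le_rfl hb, jumpSum_self]
  simp

end IsBoxLabelling

/-- A sequence of labellings in which each one arises from its successor by birational
rowmotion. -/
structure IsRowmotionOrbit (k n : ℕ) (Q : ℝ) (Z : ℕ → ℕ → ℕ → ℝ) : Prop where
  label : ∀ t, IsBoxLabelling k n Q (Z t)
  step : ∀ t a b, a < k → b < n →
    Z (t + 1) (a + 1) (b + 1) *
      (Z t (a + 1) (b + 1) * ((Z t (a + 2) (b + 1))⁻¹ + (Z t (a + 1) (b + 2))⁻¹)) =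
    Z (t + 1) a (b + 1) + Z (t + 1) (a + 1) b

namespace IsRowmotionOrbit

variable {k n : ℕ} {Q : ℝ} {Z : ℕ → ℕ → ℕ → ℝ}

lemma downRatio_succ (hZ : IsRowmotionOrbit k n Q Z) (hQ : 0 < Q) (t a b : ℕ) (ha : a < k)
    (hb : b < n) : downRatio (Z (t + 1)) (a + 1) (b + 1) = upRatio (Z t) (a + 1) (b + 1) := by
  have h := hZ.step t a b ha hb
  have h1 := ((hZ.label t).upper_pos hQ a b ha hb).ne'
  have h2 := ((hZ.label t).pos a b ha hb).ne'
  have h3 := ((hZ.label (t + 1)).lower_pos hQ a b ha hb).ne'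
  simp only [downRatio, upRatio, Nat.add_sub_cancel, add_assoc, Nat.reduceAdd] at *
  rw [div_eq_iff h3, ← h, mul_comm, mul_assoc, mul_inv_cancel₀ (mul_ne_zero h2 h1), mul_one]

lemma pathSum_shift (hZ : IsRowmotionOrbit k n Q Z) (hQ : 0 < Q) (t d b₀ b : ℕ) (hb₀ : 0 < b₀)
    (hb : b + d ≤ n) :
    pathSum (downRatio (Z (t + d))) b₀ k b = pathSum (downRatio (Z t)) (b₀ + d) k (b + d) := by
  induction d generalizing b₀ b with
  | zero => rfl
  | succ d ih =>
    rw [← add_assoc, pathSum_congr (hZ.downRatio_succ hQ (t + d)) b₀ k b le_rfl (by omega),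
      ← (hZ.label (t + d)).pathSum_downRatio_succ hQ b₀ b hb₀ (by omega),
      ih (b₀ + 1) (b + 1) (by omega) (by omega)]
    congr 1 <;> omega

lemma reciprocity_last_row (hZ : IsRowmotionOrbit k n Q Z) (hQ : 0 < Q) (hk : 0 < k) (t d : ℕ)
    (hd : d < n) : Z (t + d + 1) k (n - d) = Q * (Z t 1 (d + 1))⁻¹ := by
  obtain ⟨k, rfl⟩ : ∃ k', k = k' + 1 := ⟨k - 1, by omega⟩
  obtain ⟨b, hb⟩ : ∃ b, n - d = b + 1 := ⟨n - d - 1, by omega⟩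
  rw [← (hZ.label t).pathSum_upRatio_top hQ hk d hd, hb,
    ← (hZ.label _).pathSum_downRatio hQ k b (by omega) (by omega),
    show t + d + 1 = (t + 1) + d by omega,
    hZ.pathSum_shift hQ (t + 1) d 1 (b + 1) one_pos (by omega),
    pathSum_congr (hZ.downRatio_succ hQ t) _ _ _ le_rfl (by omega)]
  congr 1 <;> omega

/-- Reciprocity for birational rowmotion on a product of two chains. -/
theorem reciprocity (hZ : IsRowmotionOrbit k n Q Z) (hQ : 0 < Q) (c : ℕ) (hc : c < k) (t d : ℕ)
    (hd : d < n) : Z (t + c + d + 1) (k - c) (n - d) = Q * (Z t (c + 1) (d + 1))⁻¹ := by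
  induction c using Nat.strong_induction_on generalizing t d with
  | _ c ih =>
  rcases c with _ | c
  · exact hZ.reciprocity_last_row hQ hc t d hd
  obtain ⟨a, rfl⟩ : ∃ a, k = a + c + 2 := ⟨k - c - 2, by omega⟩
  obtain ⟨b, rfl⟩ : ∃ b, n = b + d + 1 := ⟨n - d - 1, by omega⟩
  have s1 := hZ.step (t + c + d + 1) (a + 1) b (by omega) (by omega)
  have s2 := hZ.step t c d (by omega) (by omega)
  have i1 := ih c (by omega) (by omega) t d hd
  have i2 := ih c (by omega) (by omega) (t + 1) d hd
  have i3 : (Z (t + c + d + 1) (a + 3) (b + 1))⁻¹ = Q⁻¹ * Z (t + 1) c (d + 1) := by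
    rcases c with _ | c
    · rcases d with _ | d
      · have h1 := (hZ.label (t + 1)).bot
        have h2 := (hZ.label (t + 1)).top
        have h3 := (hZ.label (t + 0 + 0 + 1)).top
        simp only [add_zero, zero_add] at *
        rw [h1, h3, mul_one]
      · rw [(hZ.label (t + 1)).bot_row _ (by omega)]
        have h3 := (hZ.label (t + 0 + (d + 1) + 1)).top_row (b + 1) (by omega)
        simp only [add_zero] at *
        rw [h3]; simp
    · have h := ih c (by omega) (by omega) (t + 1) d hd
      rw [show t + 1 + c + d + 1 = t + (c + 1) + d + 1 by omega,
        show a + (c + 1) + 2 - c = a + 3 by omega, show b + d + 1 - d = b + 1 by omega] at h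
      rw [h, mul_inv, inv_inv]
  have i4 : (Z (t + c + d + 1) (a + 2) (b + 2))⁻¹ = Q⁻¹ * Z (t + 1) (c + 1) d := by
    rcases d with _ | d
    · have h := (hZ.label (t + c + 0 + 1)).top_col (a + 1) (by omega)
      rw [(hZ.label (t + 1)).bot_col]
      simp only [add_zero] at *
      rw [h]; simp
    · have h := ih c (by omega) (by omega) (t + 1) d (by omega)
      rw [show t + 1 + c + d + 1 = t + c + (d + 1) + 1 by omega,
        show a + c + 2 - c = a + 2 by omega, show b + (d + 1) + 1 - d = b + 2 by omega] at h
      rw [h, mul_inv, inv_inv]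
  have i5 : Z (t + c + d + 2) (a + 2) b = Q * (Z t (c + 1) (d + 2))⁻¹ := by
    rcases b with _ | b
    · have h := (hZ.label t).top_col c (by omega)
      rw [(hZ.label _).bot_col]
      simp only [zero_add] at h
      rw [show d + 2 = d + 1 + 1 by omega, h]; simp
    · have h := ih c (by omega) (by omega) t (d + 1) (by omega)
      rw [show t + c + (d + 1) + 1 = t + c + d + 2 by omega,
        show a + c + 2 - c = a + 2 by omega,
        show b + 1 + d + 1 - (d + 1) = b + 1 by omega] at h
      exact h
  have hx := ((hZ.label t).pos c d (by omega) (by omega)).ne'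
  have hy := ((hZ.label (t + 1)).pos c d (by omega) (by omega)).ne'
  rw [show t + 1 + c + d + 1 = t + c + d + 2 by omega] at i2
  rw [show a + c + 2 - c = a + 2 by omega, show b + d + 1 - d = b + 1 by omega] at i1 i2
  rw [show t + (c + 1) + d + 1 = t + c + d + 2 by omega,
    show a + c + 2 - (c + 1) = a + 1 by omega, show b + d + 1 - d = b + 1 by omega]
  simp only [add_assoc, Nat.reduceAdd] at *
  rw [i1, i2, i3, i4, i5, ← mul_add, ← s2] at s1
  field_simp at s1 ⊢
  linear_combination -s1

end IsRowmotionOrbit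


/-- Extend a labelling of the interior of `[1, k] × [1, n]` to the neighbouring positions as
required by `IsBoxLabelling`. -/
noncomputable def extendBox (k n : ℕ) (Q : ℝ) (f : ℕ → ℕ → ℝ) : ℕ → ℕ → ℝ
  | 0, b => if b = 1 then 1 else 0
  | _ + 1, 0 => 0
  | a + 1, b + 1 =>
    if a < k ∧ b < n then f (a + 1) (b + 1) else if a = k ∧ b + 1 = n then Q else 0

/-- One step of inverse birational rowmotion. -/
noncomputable def rowmotionStep (k n : ℕ) (Q : ℝ) (f : ℕ → ℕ → ℝ) : ℕ → ℕ → ℝ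
  | 0, b => if b = 1 then 1 else 0
  | _ + 1, 0 => 0
  | a + 1, b + 1 =>
    if a < k ∧ b < n then
      (rowmotionStep k n Q f a (b + 1) + rowmotionStep k n Q f (a + 1) b) /
        (f (a + 1) (b + 1) * ((f (a + 2) (b + 1))⁻¹ + (f (a + 1) (b + 2))⁻¹))
    else if a = k ∧ b + 1 = n then Q else 0

/-- The orbit of a labelling under inverse birational rowmotion. -/
noncomputable def rowmotionOrbit (k n : ℕ) (Q : ℝ) (f : ℕ → ℕ → ℝ) : ℕ → ℕ → ℕ → ℝ
  | 0 => extendBox k n Q f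
  | t + 1 => rowmotionStep k n Q (rowmotionOrbit k n Q f t)

section

variable {k n : ℕ} {Q : ℝ} {f : ℕ → ℕ → ℝ}

lemma isBoxLabelling_extendBox (hn : 0 < n) (hf : ∀ a b, a < k → b < n → 0 < f (a + 1) (b + 1)) :
    IsBoxLabelling k n Q (extendBox k n Q f) where
  pos a b ha hb := by simpa [extendBox, ha, hb] using hf a b ha hb
  bot := by simp [extendBox]
  bot_row b hb := by simp [extendBox, hb]
  bot_col a := by simp [extendBox]
  top := by
    obtain ⟨n, rfl⟩ : ∃ n', n = n' + 1 := ⟨n - 1, by omega⟩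
    simp [extendBox]
  top_row b hb := by
    rcases b with _ | b
    · simp [extendBox]
    · simp [extendBox, hb]
  top_col a ha := by simp [extendBox, ha.ne]

lemma isBoxLabelling_rowmotionStep (hn : 0 < n) (hQ : 0 < Q) (hf : IsBoxLabelling k n Q f) :
    IsBoxLabelling k n Q (rowmotionStep k n Q f) where
  pos a b ha hb := by
    induction a generalizing b with
    | zero =>
      induction b with
      | zero =>
        rw [rowmotionStep, if_pos ⟨ha, hb⟩]
        have h1 := hf.pos 0 0 ha hb
        have h2 := hf.upper_pos hQ 0 0 ha hb
        have h3 : rowmotionStep k n Q f 0 (0 + 1) = 1 := by simp [rowmotionStep]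
        have h4 : rowmotionStep k n Q f (0 + 1) 0 = 0 := by simp [rowmotionStep]
        rw [h3, h4]
        positivity
      | succ b ihb =>
        rw [rowmotionStep, if_pos ⟨ha, hb⟩]
        have h1 := hf.pos 0 (b + 1) ha hb
        have h2 := hf.upper_pos hQ 0 (b + 1) ha hb
        have h3 := ihb (by omega)
        have h4 : rowmotionStep k n Q f 0 (b + 1 + 1) = 0 := by simp [rowmotionStep]
        rw [h4]
        positivity
    | succ a iha =>
      rw [rowmotionStep, if_pos ⟨ha, hb⟩]
      have h1 := hf.pos _ _ ha hb
      have h2 := hf.upper_pos hQ _ _ ha hb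
      have h3 := iha b (by omega) hb
      have h4 : 0 ≤ rowmotionStep k n Q f (a + 1 + 1) b := by
        induction b with
        | zero => simp [rowmotionStep]
        | succ b ihb =>
          have h4 := ihb (by omega) (hf.pos _ _ ha (by omega))
            (hf.upper_pos hQ _ _ ha (by omega)) (iha b (by omega) (by omega))
          have h1 := hf.pos _ b ha (by omega)
          have h2 := hf.upper_pos hQ _ b ha (by omega)
          have h3 := iha b (by omega) (by omega)
          rw [rowmotionStep, if_pos ⟨ha, by omega⟩]
          positivity
      positivity
  bot := by simp [rowmotionStep]
  bot_row b hb := by simp [rowmotionStep, hb]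
  bot_col a := by simp [rowmotionStep]
  top := by
    obtain ⟨n, rfl⟩ : ∃ n', n = n' + 1 := ⟨n - 1, by omega⟩
    simp [rowmotionStep]
  top_row b hb := by
    rcases b with _ | b
    · simp [rowmotionStep]
    · simp [rowmotionStep, hb]
  top_col a ha := by simp [rowmotionStep, ha.ne]

lemma isRowmotionOrbit_rowmotionOrbit (hn : 0 < n) (hQ : 0 < Q)
    (hf : ∀ a b, a < k → b < n → 0 < f (a + 1) (b + 1)) :
    IsRowmotionOrbit k n Q (rowmotionOrbit k n Q f) := by
  have hl : ∀ t, IsBoxLabelling k n Q (rowmotionOrbit k n Q f t) := by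
    intro t
    induction t with
    | zero => exact isBoxLabelling_extendBox hn hf
    | succ t ih => exact isBoxLabelling_rowmotionStep hn hQ ih
  refine ⟨hl, fun t a b ha hb => ?_⟩
  have h1 := (hl t).pos a b ha hb
  have h2 := (hl t).upper_pos hQ a b ha hb
  conv_lhs => rw [rowmotionOrbit, rowmotionStep, if_pos ⟨ha, hb⟩]
  rw [div_mul_cancel₀ _ (by positivity)]
  rfl

end

section

open Filter Asymptotics

lemma isTheta_add_of_nonneg {f g φ : ℝ → ℝ} (hf : f =Θ[atTop] φ) (hg : g =O[atTop] φ)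
    (hf0 : ∀ᶠ q in atTop, 0 ≤ f q) (hg0 : ∀ᶠ q in atTop, 0 ≤ g q) :
    (fun q => f q + g q) =Θ[atTop] φ := by
  refine ⟨hf.1.add hg, hf.2.trans (IsBigO.of_bound 1 ?_)⟩
  filter_upwards [hf0, hg0] with q h1 h2
  rw [Real.norm_of_nonneg h1, Real.norm_of_nonneg (by positivity)]
  linarith

lemma isBigO_pow_pow_atTop {a b : ℕ} (h : a ≤ b) :
    (fun q : ℝ => q ^ a) =O[atTop] fun q => q ^ b := by
  refine IsBigO.of_bound 1 ?_
  filter_upwards [eventually_ge_atTop 1] with q hq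
  rw [Real.norm_of_nonneg (by positivity), Real.norm_of_nonneg (by positivity), one_mul]
  exact pow_le_pow_right₀ hq h

lemma isBigO_inv_pow_inv_pow_atTop {a b : ℕ} (h : b ≤ a) :
    (fun q : ℝ => (q ^ a)⁻¹) =O[atTop] fun q => (q ^ b)⁻¹ := by
  refine IsBigO.of_bound 1 ?_
  filter_upwards [eventually_ge_atTop 1] with q hq
  rw [Real.norm_of_nonneg (by positivity), Real.norm_of_nonneg (by positivity), one_mul]
  exact inv_anti₀ (by positivity) (pow_le_pow_right₀ hq h)

lemma isTheta_add_pow_max {f g : ℝ → ℝ} {a b : ℕ} (hf : f =Θ[atTop] fun q => q ^ a)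
    (hg : g =Θ[atTop] fun q => q ^ b)
    (hf0 : ∀ᶠ q in atTop, 0 ≤ f q) (hg0 : ∀ᶠ q in atTop, 0 ≤ g q) :
    (fun q => f q + g q) =Θ[atTop] fun q => q ^ max a b := by
  rcases le_total a b with h | h
  · rw [max_eq_right h]
    simpa only [add_comm] using
      isTheta_add_of_nonneg hg (hf.1.trans (isBigO_pow_pow_atTop h)) hg0 hf0
  · rw [max_eq_left h]
    exact isTheta_add_of_nonneg hf (hg.1.trans (isBigO_pow_pow_atTop h)) hf0 hg0

lemma isTheta_add_inv_pow_min {f g : ℝ → ℝ} {a b : ℕ} (hf : f =Θ[atTop] fun q => (q ^ a)⁻¹)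
    (hg : g =Θ[atTop] fun q => (q ^ b)⁻¹)
    (hf0 : ∀ᶠ q in atTop, 0 ≤ f q) (hg0 : ∀ᶠ q in atTop, 0 ≤ g q) :
    (fun q => f q + g q) =Θ[atTop] fun q => (q ^ min a b)⁻¹ := by
  rcases le_total a b with h | h
  · rw [min_eq_left h]
    exact isTheta_add_of_nonneg hf (hg.1.trans (isBigO_inv_pow_inv_pow_atTop h)) hf0 hg0
  · rw [min_eq_right h]
    simpa only [add_comm] using
      isTheta_add_of_nonneg hg (hf.1.trans (isBigO_inv_pow_inv_pow_atTop h)) hg0 hf0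

lemma eq_of_isTheta_pow {a b : ℕ}
    (h : (fun q : ℝ => q ^ a) =Θ[atTop] fun q => q ^ b) : a = b := by
  have key : ∀ a b : ℕ, (fun q : ℝ => q ^ a) =O[atTop] (fun q : ℝ => q ^ b) → a ≤ b := by
    intro a b h
    by_contra! hlt
    refine (isLittleO_pow_pow_atTop_of_lt hlt).not_isBigO ?_ h
    exact ((eventually_gt_atTop (0 : ℝ)).mono fun q hq => (pow_pos hq b).ne').frequently
  exact le_antisymm (key a b h.1) (key b a h.2)

/-- Labellings of `[1, k] × [1, n]` by numbers in `[0, m]`, each of which arises from its successor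
by piecewise-linear rowmotion. -/
structure IsTropicalOrbit (k n m : ℕ) (y : ℕ → ℕ → ℕ → ℕ) : Prop where
  le : ∀ t a b, a < k → b < n → y t (a + 1) (b + 1) ≤ m
  bot_row : ∀ t b, b < n → y t 0 (b + 1) = 0
  bot_col : ∀ t a, a < k → y t (a + 1) 0 = 0
  top_row : ∀ t b, b < n → y t (k + 1) (b + 1) = m
  top_col : ∀ t a, a < k → y t (a + 1) (n + 1) = m
  step : ∀ t a b, a < k → b < n →
    y (t + 1) (a + 1) (b + 1) + y t (a + 1) (b + 1) =
      max (y (t + 1) a (b + 1)) (y (t + 1) (a + 1) b) +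
        min (y t (a + 2) (b + 1)) (y t (a + 1) (b + 2))

namespace IsTropicalOrbit

variable {k n m : ℕ} {y : ℕ → ℕ → ℕ → ℕ}

lemma isRowmotionOrbit (hn : 0 < n) {q : ℝ} (hq : 0 < q) :
    IsRowmotionOrbit k n (q ^ m) (rowmotionOrbit k n (q ^ m) fun a b => q ^ y 0 a b) :=
  isRowmotionOrbit_rowmotionOrbit hn (by positivity) fun a b _ _ => by positivity

lemma isTheta (hy : IsTropicalOrbit k n m y) (hn : 0 < n) (t a b : ℕ) (ha : a < k) (hb : b < n) :
    (fun q : ℝ => rowmotionOrbit k n (q ^ m) (fun a b => q ^ y 0 a b) t (a + 1) (b + 1))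
      =Θ[atTop] fun q => q ^ y t (a + 1) (b + 1) := by
  set Z : ℝ → ℕ → ℕ → ℕ → ℝ :=
    fun q => rowmotionOrbit k n (q ^ m) fun a b => q ^ y 0 a b with hZ
  have orb : ∀ q : ℝ, 0 < q → IsRowmotionOrbit k n (q ^ m) (Z q) := fun q hq =>
    isRowmotionOrbit hn hq
  have pos : ∀ t a b, a < k → b < n → ∀ᶠ q in atTop, 0 ≤ Z q t (a + 1) (b + 1) := by
    intro t a b ha hb
    filter_upwards [eventually_gt_atTop 0] with q hq
    exact (((orb q hq).label t).pos a b ha hb).le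
  have ext : ∀ {f g φ : ℝ → ℝ}, g =Θ[atTop] φ → (∀ q, 0 < q → f q = g q) → f =Θ[atTop] φ := by
    intro f g φ h hfg
    have e : f =ᶠ[atTop] g := (eventually_gt_atTop 0).mono hfg
    exact e.trans_isTheta h
  change (fun q => Z q t (a + 1) (b + 1)) =Θ[atTop] fun q => q ^ y t (a + 1) (b + 1)
  induction t generalizing a b with
  | zero =>
    refine ext (isTheta_refl _ _) fun q _ => ?_
    simp [hZ, rowmotionOrbit, extendBox, ha, hb]
  | succ t iht =>
    have step : ∀ a b, a < k → b < n →
        (fun q => Z q (t + 1) a (b + 1) + Z q (t + 1) (a + 1) b) =Θ[atTop]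
          (fun q => q ^ max (y (t + 1) a (b + 1)) (y (t + 1) (a + 1) b)) →
        (fun q => Z q (t + 1) (a + 1) (b + 1)) =Θ[atTop]
          fun q => q ^ y (t + 1) (a + 1) (b + 1) := by
      intro a b ha hb low
      have up : (fun q => (Z q t (a + 2) (b + 1))⁻¹ + (Z q t (a + 1) (b + 2))⁻¹) =Θ[atTop]
          fun q => (q ^ min (y t (a + 2) (b + 1)) (y t (a + 1) (b + 2)))⁻¹ := by
        by_cases h1 : a + 1 = k
        · have e1 : y t (a + 2) (b + 1) = m := by rw [← hy.top_row t b hb, ← h1]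
          by_cases h2 : b + 1 = n
          · have e2 : y t (a + 1) (b + 2) = m := by rw [← hy.top_col t a ha, ← h2]
            rw [e1, e2, min_self]
            refine ext (isTheta_refl _ _) fun q hq => ?_
            have l := ((orb q hq).label t).top
            have r := ((orb q hq).label t).top_col a ha
            rw [← h1, ← h2] at l
            rw [← h2] at r
            rw [l, r]; simp
          · have l := hy.le t a (b + 1) ha (by omega)
            rw [e1, min_eq_right l]
            refine ext (iht a (b + 1) ha (by omega)).inv fun q hq => ?_
            have r := ((orb q hq).label t).top_row (b + 1) h2
            rw [← h1] at r
            rw [r]; simp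
        · by_cases h2 : b + 1 = n
          · have e2 : y t (a + 1) (b + 2) = m := by rw [← hy.top_col t a ha, ← h2]
            have l := hy.le t (a + 1) b (by omega) hb
            rw [e2, min_eq_left l]
            refine ext (iht (a + 1) b (by omega) hb).inv fun q hq => ?_
            have r := ((orb q hq).label t).top_col a ha
            rw [← h2] at r
            rw [r]; simp
          · exact isTheta_add_inv_pow_min (iht (a + 1) b (by omega) hb).inv
              (iht a (b + 1) ha (by omega)).inv
              ((pos t (a + 1) b (by omega) hb).mono fun q => inv_nonneg.2)
              ((pos t a (b + 1) ha (by omega)).mono fun q => inv_nonneg.2)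
      have h := low.div ((iht a b ha hb).mul up)
      refine (ext h fun q hq => ?_).trans (ext (isTheta_refl _ _) fun q hq => ?_)
      · have h1 := ((orb q hq).label t).pos a b ha hb
        have h2 := ((orb q hq).label t).upper_pos (by positivity) a b ha hb
        rw [eq_div_iff (by positivity)]
        exact (orb q hq).step t a b ha hb
      · rw [div_eq_iff (by positivity), ← mul_assoc, ← pow_add, hy.step t a b ha hb, pow_add]
        field_simp
    induction a generalizing b with
    | zero =>
      induction b with
      | zero =>
        refine step 0 0 ha hb ?_
        rw [hy.bot_row _ 0 hb, hy.bot_col _ 0 ha, max_self]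
        refine ext (isTheta_refl _ _) fun q hq => ?_
        have l := ((orb q hq).label (t + 1)).bot
        have r := ((orb q hq).label (t + 1)).bot_col 0
        rw [zero_add, l, r]; simp
      | succ b ihb =>
        refine step 0 (b + 1) ha hb ?_
        rw [hy.bot_row _ (b + 1) hb, max_eq_right (Nat.zero_le _)]
        refine ext (ihb (by omega)) fun q hq => ?_
        rw [((orb q hq).label (t + 1)).bot_row _ (by omega), zero_add]
    | succ a iha =>
      induction b with
      | zero =>
        refine step (a + 1) 0 ha hb ?_
        rw [hy.bot_col _ (a + 1) ha, max_eq_left (Nat.zero_le _)]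
        refine ext (iha 0 (by omega) hb) fun q hq => ?_
        rw [((orb q hq).label (t + 1)).bot_col (a + 1), add_zero]
      | succ b ihb =>
        exact step (a + 1) (b + 1) ha hb <| isTheta_add_pow_max
          (iha (b + 1) (by omega) hb) (ihb (by omega))
          (pos (t + 1) a (b + 1) (by omega) hb) (pos (t + 1) (a + 1) b ha (by omega))

/-- Reciprocity for piecewise-linear rowmotion on a product of two chains. -/
theorem reciprocity (hy : IsTropicalOrbit k n m y) {c d : ℕ} (hc : c < k) (hd : d < n) :
    y (c + d + 1) (k - c) (n - d) + y 0 (c + 1) (d + 1) = m := by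
  have hn : 0 < n := by omega
  obtain ⟨a, ha⟩ : ∃ a, k - c = a + 1 := ⟨k - c - 1, by omega⟩
  obtain ⟨b, hb⟩ : ∃ b, n - d = b + 1 := ⟨n - d - 1, by omega⟩
  rw [ha, hb]
  have h := (hy.isTheta hn (c + d + 1) a b (by omega) (by omega)).mul (hy.isTheta hn 0 c d hc hd)
  simp only [← pow_add] at h
  refine eq_of_isTheta_pow (h.symm.trans ?_)
  refine EventuallyEq.isTheta ?_
  filter_upwards [eventually_gt_atTop 0] with q hq
  have orb := isRowmotionOrbit (k := k) (m := m) (y := y) hn hq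
  have hr := orb.reciprocity (by positivity) c hc 0 d hd
  have hp := ((orb.label 0).pos c d hc hd).ne'
  rw [ha, hb, zero_add] at hr
  rw [hr]
  field_simp

end IsTropicalOrbit

end


lemma OneBox.exists_row {α β : YoungDiagram} (h : OneBox α β) :
    ∃ x, (x, α.rowLen x) ∈ β ∧ ∀ i, β.rowLen i = α.rowLen i + if i = x then 1 else 0 := by
  obtain ⟨hle, hcard⟩ := h
  have hsub : α.cells ⊆ β.cells := hle
  have h1 : (β.cells \ α.cells).card = 1 := by
    rw [Finset.card_sdiff_of_subset hsub, hcard]; omega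
  obtain ⟨⟨x, z⟩, hx⟩ := Finset.card_eq_one.1 h1
  have hmem : ∀ i j, ((i, j) ∈ β ∧ (i, j) ∉ α) ↔ i = x ∧ j = z := by
    intro i j
    have := Finset.ext_iff.1 hx (i, j)
    simpa using this
  have hz : α.rowLen x = z := by
    obtain ⟨hb, ha⟩ := (hmem x z).2 ⟨rfl, rfl⟩
    rw [YoungDiagram.mem_iff_lt_rowLen] at hb ha
    by_contra hne
    have h2 := (hmem x (α.rowLen x)).1
      ⟨YoungDiagram.mem_iff_lt_rowLen.2 (by omega), by simp [YoungDiagram.mem_iff_lt_rowLen]⟩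
    exact hne h2.2
  refine ⟨x, hz ▸ ((hmem x z).2 ⟨rfl, rfl⟩).1, fun i => ?_⟩
  have hle' : α.rowLen i ≤ β.rowLen i := by
    by_contra! hlt
    have h2 := hle (YoungDiagram.mem_iff_lt_rowLen.2 hlt)
    rw [YoungDiagram.mem_iff_lt_rowLen] at h2
    omega
  have key : ∀ j, (α.rowLen i ≤ j ∧ j < β.rowLen i) ↔ i = x ∧ j = z := by
    intro j
    rw [← hmem, YoungDiagram.mem_iff_lt_rowLen, YoungDiagram.mem_iff_lt_rowLen]
    omega
  split_ifs with hi
  · subst hi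
    have h3 := (key z).2 ⟨rfl, rfl⟩
    have h4 := key (z + 1)
    omega
  · have h3 := key (α.rowLen i)
    omega

lemma YoungDiagram.eq_of_rowLen_eq {μ ν : YoungDiagram} (h : ∀ i, μ.rowLen i = ν.rowLen i) :
    μ = ν := by
  ext ⟨i, j⟩
  rw [YoungDiagram.mem_cells, YoungDiagram.mem_cells, YoungDiagram.mem_iff_lt_rowLen,
    YoungDiagram.mem_iff_lt_rowLen, h]

/-- The local growth rule, expressed through row lengths, is a piecewise-linear toggle. -/
lemma GrowthSq.rowLen_add_rowLen {γ α δ β : YoungDiagram} (hγα : OneBox γ α) (hγδ : OneBox γ δ)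
    (hαβ : OneBox α β) (hδβ : OneBox δ β) (h : GrowthSq γ α δ β) {M : ℕ} (hM : β.rowLen 0 ≤ M)
    (p : ℕ) :
    α.rowLen p + δ.rowLen p = max (β.rowLen (p + 1)) (γ.rowLen p) +
      min (if p = 0 then M else γ.rowLen (p - 1)) (β.rowLen p) := by
  obtain ⟨x, hx, hα⟩ := hγα.exists_row
  obtain ⟨y, hy, hδ⟩ := hγδ.exists_row
  obtain ⟨x', hx', hβ⟩ := hαβ.exists_row
  obtain ⟨y', hy', hβ'⟩ := hδβ.exists_row
  have aγ : ∀ i, γ.rowLen (i + 1) ≤ γ.rowLen i := fun i => γ.rowLen_anti _ _ (Nat.le_succ i)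
  have aα : ∀ i, α.rowLen (i + 1) ≤ α.rowLen i := fun i => α.rowLen_anti _ _ (Nat.le_succ i)
  have aδ : ∀ i, δ.rowLen (i + 1) ≤ δ.rowLen i := fun i => δ.rowLen_anti _ _ (Nat.le_succ i)
  have aβ : ∀ i, β.rowLen (i + 1) ≤ β.rowLen i := fun i => β.rowLen_anti _ _ (Nat.le_succ i)
  have hxy : (x ≠ y ∧ x' = y) ∨ (x = y ∧ x' = x) ∨ (x = y ∧ x' = x + 1 ∧
      γ.rowLen (x + 1) = γ.rowLen x) := by
    by_cases hne : x = y
    · right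
      subst hne
      have hαδ : α = δ := YoungDiagram.eq_of_rowLen_eq fun i => by rw [hα, hδ]
      by_cases hxx : x' = x
      · exact Or.inl ⟨rfl, hxx⟩
      right
      have hadj : AdjCell (x, γ.rowLen x) (x', α.rowLen x') := by
        by_contra hadj
        refine h ⟨(x, γ.rowLen x), hαβ.1 hx, (x', α.rowLen x'), hx', ?_, ?_, ?_, hadj⟩ hαδ
        · simp [YoungDiagram.mem_iff_lt_rowLen]
        · simp [YoungDiagram.mem_iff_lt_rowLen, hα]
        · simp [Ne.symm hxx]
      have hx'α := hα x'
      rw [if_neg hxx] at hx'α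
      simp only [AdjCell, hx'α] at hadj
      rcases hadj with ⟨h1, -⟩ | ⟨h1, h2 | h2⟩
      · exact absurd h1.symm hxx
      · subst h2
        exact ⟨rfl, rfl, h1.symm⟩
      · exfalso
        have := aα x'
        rw [h2, hα x] at this
        simp at this
        omega
    · left
      refine ⟨hne, ?_⟩
      have h1 := hβ y
      rw [hα y, hβ' y, hδ y, if_neg (Ne.symm hne)] at h1
      by_contra h2
      rw [if_neg (Ne.symm h2)] at h1
      split_ifs at h1 <;> omega
  clear hx hy hx' hy' hγα hγδ hαβ hδβ h
  rcases p with _ | p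
  · have h1 := aγ 0
    have h2 := aδ 0
    have h3 := aα 0
    have h4 := aβ 0
    have e1 := hα 0
    have e2 := hα (0 + 1)
    have e3 := hδ 0
    have e4 := hδ (0 + 1)
    have e5 := hβ 0
    have e6 := hβ (0 + 1)
    rw [if_pos rfl, min_eq_right hM]
    clear hα hδ hβ hβ' aγ aα aδ aβ
    grind
  · have h1 := aγ p
    have h2 := aδ p
    have h3 := aα p
    have h4 := aβ p
    have h1' := aγ (p + 1)
    have h2' := aδ (p + 1)
    have h3' := aα (p + 1)
    have h4' := aβ (p + 1)
    have e1 := hα p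
    have e2 := hα (p + 1)
    have e2' := hα (p + 1 + 1)
    have e3 := hδ p
    have e4 := hδ (p + 1)
    have e4' := hδ (p + 1 + 1)
    have e5 := hβ p
    have e6 := hβ (p + 1)
    have e6' := hβ (p + 1 + 1)
    rw [if_neg (Nat.succ_ne_zero p), Nat.add_sub_cancel]
    clear hα hδ hβ hβ' aγ aα aδ aβ
    grind

lemma mem_rectYD {k m : ℕ} {c : ℕ × ℕ} : c ∈ rectYD k m ↔ c.1 < k ∧ c.2 < m := by
  rw [← YoungDiagram.mem_cells]
  simp [rectYD]

lemma rowLen_le_of_le_rectYD {k m : ℕ} {μ : YoungDiagram} (h : μ ≤ rectYD k m) (p : ℕ) :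
    μ.rowLen p ≤ m := by
  by_contra! hlt
  have := mem_rectYD.1 (h (YoungDiagram.mem_iff_lt_rowLen.2 hlt))
  simp at this

lemma rowLen_eq_zero_of_le_rectYD {k m : ℕ} {μ : YoungDiagram} (h : μ ≤ rectYD k m) {p : ℕ}
    (hp : k ≤ p) : μ.rowLen p = 0 := by
  by_contra hlt
  have := mem_rectYD.1 (h (YoungDiagram.mem_iff_lt_rowLen.2 (Nat.pos_of_ne_zero hlt)))
  simp only at this
  omega

lemma rowLen_eq_zero_of_card_le {μ : YoungDiagram} {p : ℕ} (h : μ.cells.card ≤ p) :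
    μ.rowLen p = 0 := by
  by_contra hlt
  have hmem : (p, 0) ∈ μ := YoungDiagram.mem_iff_lt_rowLen.2 (Nat.pos_of_ne_zero hlt)
  have hsub : (Finset.range (p + 1)).map ⟨fun i => (i, 0), Prod.mk_left_injective 0⟩ ⊆ μ.cells := by
    intro c hc
    simp only [Finset.mem_map, Finset.mem_range, Function.Embedding.coeFn_mk] at hc
    obtain ⟨i, hi, rfl⟩ := hc
    exact μ.up_left_mem (by omega) le_rfl hmem
  have := Finset.card_le_card hsub
  simp at this
  omega

lemma rowLen_eq_of_le_rectYD_of_card {k m : ℕ} {μ : YoungDiagram} (h : μ ≤ rectYD k m) {p : ℕ}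
    (hc : k * m < μ.cells.card + (k - p)) : μ.rowLen p = m := by
  refine le_antisymm (rowLen_le_of_le_rectYD h p) ?_
  by_contra! hlt
  have hsub : (Finset.Ico p k).map ⟨fun i => (i, m - 1), Prod.mk_left_injective (m - 1)⟩ ⊆
      (rectYD k m).cells \ μ.cells := by
    intro c hc
    simp only [Finset.mem_map, Finset.mem_Ico, Function.Embedding.coeFn_mk] at hc
    obtain ⟨i, hi, rfl⟩ := hc
    rw [Finset.mem_sdiff, YoungDiagram.mem_cells, YoungDiagram.mem_cells, mem_rectYD,
      YoungDiagram.mem_iff_lt_rowLen]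
    have := μ.rowLen_anti p i hi.1
    simp only
    omega
  have h1 := Finset.card_le_card hsub
  have h2 := Finset.card_le_card (show μ.cells ⊆ (rectYD k m).cells from h)
  rw [Finset.card_sdiff_of_subset h] at h1
  simp only [Finset.card_map, Nat.card_Ico, rectYD, Finset.card_product, Finset.card_range] at h1 h2
  omega

namespace IsCylGrowth

variable {r k m : ℕ} {L : ℤ → ℤ → YoungDiagram}

lemma card_cells (hL : IsCylGrowth r k m L) (i j : ℤ) (h0 : 0 ≤ i + j) (hr : i + j ≤ r) :
    ((L i j).cells.card : ℤ) = i + j := by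
  obtain ⟨l, hl⟩ := Int.eq_ofNat_of_zero_le h0
  induction l generalizing j with
  | zero =>
    obtain rfl : j = -i := by simp at hl; omega
    rw [hL.2.2.2.1]
    simp
  | succ l ih =>
    have h1 := (hL.2.1 i (j - 1) (by omega) (by omega)).2
    have h2 := ih (j - 1) (by omega) (by omega) (by omega)
    rw [sub_add_cancel] at h1
    rw [h1]
    push_cast
    omega

lemma le_rectYD (hL : IsCylGrowth r k m L) (i j : ℤ) (h0 : 0 ≤ i + j) (hr : i + j ≤ r) :
    L i j ≤ rectYD k m := by
  obtain ⟨l, hl⟩ := Int.eq_ofNat_of_zero_le (sub_nonneg.2 hr)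
  induction l generalizing j with
  | zero =>
    obtain rfl : j = r - i := by simp at hl; omega
    rw [hL.2.2.2.2]
  | succ l ih =>
    exact (hL.2.1 i j (by omega) (by omega)).1.trans
      (ih (j + 1) (by omega) (by omega) (by omega))

lemma isTropicalOrbit (hL : IsCylGrowth r k m L) (hr : r = k * m) {n : ℕ} (hn : r = k + n)
    (s : ℤ) :
    IsTropicalOrbit k n m fun t a b =>
      if a = k + 1 then m else (L (k + 1 - a - t - s) (b - 1 + t + s)).rowLen (k - a) where
  le t a b ha hb := by
    rw [if_neg (by omega)]
    exact rowLen_le_of_le_rectYD (hL.le_rectYD _ _ (by push_cast; omega) (by push_cast; omega)) _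
  bot_row t b hb := by
    rw [if_neg (by omega)]
    exact rowLen_eq_zero_of_le_rectYD
      (hL.le_rectYD _ _ (by push_cast; omega) (by push_cast; omega)) (by omega)
  bot_col t a ha := by
    rw [if_neg (by omega)]
    apply rowLen_eq_zero_of_card_le
    have := hL.card_cells (k + 1 - (a + 1 : ℕ) - t - s) ((0 : ℕ) - 1 + t + s)
      (by push_cast; omega) (by push_cast; omega)
    omega
  top_row t b hb := if_pos rfl
  top_col t a ha := by
    rw [if_neg (by omega)]
    apply rowLen_eq_of_le_rectYD_of_card
      (hL.le_rectYD _ _ (by push_cast; omega) (by push_cast; omega))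
    have := hL.card_cells (k + 1 - (a + 1 : ℕ) - t - s) ((n + 1 : ℕ) - 1 + t + s)
      (by push_cast; omega) (by push_cast; omega)
    rw [← hr]
    omega
  step t a b ha hb := by
    obtain ⟨p, rfl⟩ : ∃ p, k = a + p + 1 := ⟨k - a - 1, by omega⟩
    have h0 : (0 : ℤ) ≤ (p - t - s) + (b + t + s) := by omega
    have h2 : ((p - t - s) + (b + t + s) + 2 : ℤ) ≤ r := by omega
    generalize hS : (p - t - s : ℤ) = S at *
    generalize hT : (b + t + s : ℤ) = T at *
    have h := (hL.2.2.1 S T h0 h2).rowLen_add_rowLen (hL.2.1 S T h0 (by omega))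
      (hL.1 S T h0 (by omega)) (hL.1 S (T + 1) (by omega) (by omega))
      (hL.2.1 (S + 1) T (by omega) (by omega))
      (rowLen_le_of_le_rectYD (hL.le_rectYD _ _ (by omega) (by omega)) 0) p
    have key : ∀ {A B A' B' : ℤ} {u v : ℕ}, A = A' → B = B' → u = v →
        (L A B).rowLen u = (L A' B').rowLen v := by
      rintro _ _ _ _ _ _ rfl rfl rfl
      rfl
    refine Eq.trans (congrArg₂ _ ?_ ?_)
      (h.trans (congrArg₂ _ (congrArg₂ _ ?_ ?_) (congrArg₂ _ ?_ ?_)))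
    · rw [if_neg (by omega)]
      exact key (by omega) (by omega) (by omega)
    · rw [if_neg (by omega)]
      exact key (by omega) (by omega) (by omega)
    · rw [if_neg (by omega)]
      exact key (by omega) (by omega) (by omega)
    · rw [if_neg (by omega)]
      exact key (by omega) (by omega) (by omega)
    · by_cases hp : p = 0
      · rw [if_pos hp, if_pos (by omega)]
      · rw [if_neg hp, if_neg (by omega)]
        exact key (by omega) (by omega) (by omega)
    · rw [if_neg (by omega)]
      exact key (by omega) (by omega) (by omega)

/-- Complementary rows of opposite vertices have total length `m`. -/
lemma rowLen_add_rowLen (hL : IsCylGrowth r k m L) (hr : r = k * m) {i j : ℤ} (h0 : 0 ≤ i + j)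
    (h1 : i + j ≤ r) {p : ℕ} (hp : p < k) :
    (L i j).rowLen p + (L (-j) (r - i)).rowLen (k - 1 - p) = m := by
  have le1 := hL.le_rectYD i j h0 h1
  have le2 := hL.le_rectYD (-j) (r - i) (by omega) (by omega)
  have c1 := hL.card_cells i j h0 h1
  have c2 := hL.card_cells (-j) (r - i) (by omega) (by omega)
  rcases Nat.eq_zero_or_pos m with rfl | hm
  · have := rowLen_le_of_le_rectYD le1 p
    have := rowLen_le_of_le_rectYD le2 (k - 1 - p)
    omega
  obtain ⟨n, hn⟩ : ∃ n, r = k + n := Nat.exists_eq_add_of_le (hr ▸ Nat.le_mul_of_pos_right k hm)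
  obtain ⟨l, hl⟩ := Int.eq_ofNat_of_zero_le h0
  by_cases hlp : l ≤ p
  · rw [rowLen_eq_zero_of_card_le (by omega),
      rowLen_eq_of_le_rectYD_of_card le2 (by rw [← hr]; omega), zero_add]
  by_cases hln : p + 1 + n ≤ l
  · rw [rowLen_eq_zero_of_card_le (p := k - 1 - p) (by omega),
      rowLen_eq_of_le_rectYD_of_card le1 (by rw [← hr]; omega), add_zero]
  obtain ⟨d, rfl⟩ : ∃ d, l = p + 1 + d := ⟨l - p - 1, by omega⟩
  have h := (hL.isTropicalOrbit hr hn (j - d)).reciprocity (c := k - 1 - p) (d := d)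
    (by omega) (by omega)
  rw [if_neg (by omega), if_neg (by omega), add_comm] at h
  convert h using 3
  · congr 1 <;> (push_cast; omega)
  · omega
  · congr 1 <;> (push_cast; omega)
  · omega

end IsCylGrowth


/-- The symmetry of a cylindrical growth diagram:
`λ_{(r−j)(−i)} = (λ_{ij})^c`, where `λ^c` is the complementary partition with respect
to the `k × m` rectangle. -/
theorem cylindrical_growth_complement_symmetry
    (r k m : ℕ) (hr : r = k * m) (L : ℤ → ℤ → YoungDiagram)
    (hL : IsCylGrowth r k m L) :
    ∀ i j : ℤ, 0 ≤ i + j → i + j ≤ r → L ((r : ℤ) - j) (-i) = complYD k m (L i j) := by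
  intro i j h0 h1
  have hle := hL.le_rectYD (r - j) (-i) (by omega) (by omega)
  ext ⟨a, b⟩
  simp only [complYD, Finset.mem_filter, YoungDiagram.mem_cells]
  rw [mem_rectYD, YoungDiagram.mem_iff_lt_rowLen, YoungDiagram.mem_iff_lt_rowLen]
  by_cases ha : a < k
  · have h := hL.rowLen_add_rowLen hr (i := r - j) (j := -i) (by omega) (by omega) ha
    rw [neg_neg, sub_sub_cancel] at h
    omega
  · rw [rowLen_eq_zero_of_le_rectYD hle (by omega)]
    omega
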